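/- arXiv:2206.14466 — 8 statements merged into one kernel-verified Lean document; each statement's English description precedes it below -/
import Mathlib

section
/- Perfect hiding of the Pedersen commitment: if h ≠ 0 and h generates G (i.e., for every y ∈ G there exists r ∈ ZMod p with r • h = y), then for every fixed value x ∈ ZMod p the map sending a mask r ∈ ZMod p to the commitment Cm(x, r) is a bijection from ZMod p onto G; in particular the commitment of any value under a uniformly random mask is uniformly distributed on G, independently of x. -/
/-- Pedersen commitment: `Cm g h x r = x • g + r • h`. -/
def Cm (p : ℕ) {G : Type*} [AddCommGroup G] [Module (ZMod p) G]
    (g h : G) (x r : ZMod p) : G :=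
  x • g + r • h

/-- Perfect hiding of the Pedersen commitment: if `h` is a nonzero generator of `G`,
then for every fixed value `x` the map `r ↦ Cm x r` is a bijection from `ZMod p` onto `G`. -/
theorem pedersen_perfect_hiding (p : ℕ) [Fact p.Prime] {G : Type*} [AddCommGroup G]
    [Module (ZMod p) G] (g h : G) (hh : h ≠ 0)
    (hgen : ∀ y : G, ∃ r : ZMod p, r • h = y) :
    ∀ x : ZMod p, Function.Bijective (fun r : ZMod p => Cm p g h x r) := by
  intro x
  refine ⟨fun r s hrs => ?_, fun y => ?_⟩
  · exact smul_left_injective (ZMod p) hh (add_left_cancel (show x • g + r • h = x • g + s • h from hrs))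
  · obtain ⟨r, hr⟩ := hgen (y - x • g)
    refine ⟨r, ?_⟩
    show x • g + r • h = y
    rw [hr, add_sub_cancel]
end

section
/- Binding of the Pedersen commitment reduces to the discrete logarithm: if two openings collide, i.e., Cm(x₁, r₁) = Cm(x₂, r₂) with r₁ ≠ r₂, then the discrete logarithm of h with respect to g is revealed: h = ((x₁ − x₂) / (r₂ − r₁)) • g. -/
/-- Binding reduces to discrete log: colliding openings with distinct masks reveal the
discrete logarithm of `h` with respect to `g`. -/
theorem pedersen_binding_dlog (p : ℕ) [Fact p.Prime] {G : Type*} [AddCommGroup G]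
    [Module (ZMod p) G] (g h : G) (x₁ x₂ r₁ r₂ : ZMod p)
    (hcollide : Cm p g h x₁ r₁ = Cm p g h x₂ r₂) (hr : r₁ ≠ r₂) :
    h = ((x₁ - x₂) / (r₂ - r₁)) • g := by
  have hne : r₂ - r₁ ≠ 0 := sub_ne_zero.mpr hr.symm
  unfold Cm at hcollide
  have key : (x₁ - x₂) • g = (r₂ - r₁) • h := by
    rw [sub_smul, sub_smul, sub_eq_sub_iff_add_eq_add, hcollide, add_comm]
  rw [div_eq_inv_mul, mul_smul, key, inv_smul_smul₀ hne]
end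

section
/- Completeness of the zero-knowledge proof of non-negativity (zkpNN): let m ≥ 1, let b : Fin m → ZMod p be the bit values and ρ : Fin m → ZMod p their masks, and suppose the committed value satisfies the binary decomposition x = Σ_{i=1}^{m} b_i · 2^{i−1} in ZMod p. Let C = Cm(x, r), B_i = Cm(b_i, ρ_i) for each i, A = Cm(0, r') = r' • h, and for a challenge β ∈ ZMod p let the response be z_r = r' + β·(Σ_{i=1}^{m} ρ_i · 2^{i−1} − r). Then the verifier's check passes: z_r • h = A − β • C + Σ_{i=1}^{m} (β · 2^{i−1}) • B_i. -/
/-- Completeness of zkpNN: with the binary decomposition `x = Σ b_i · 2^(i-1)`, the honest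
prover's response passes the verifier's check. -/
theorem zkpNN_complete (p : ℕ) [Fact p.Prime] {G : Type*} [AddCommGroup G]
    [Module (ZMod p) G] (g h : G) (m : ℕ) (hm : 1 ≤ m)
    (b ρ : Fin m → ZMod p) (x r r' β : ZMod p)
    (hx : x = ∑ i : Fin m, b i * 2 ^ (i : ℕ))
    (C : G) (hC : C = Cm p g h x r)
    (B : Fin m → G) (hB : ∀ i, B i = Cm p g h (b i) (ρ i))
    (A : G) (hA : A = Cm p g h 0 r')
    (zr : ZMod p) (hzr : zr = r' + β * (∑ i : Fin m, ρ i * 2 ^ (i : ℕ) - r)) :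
    zr • h = A - β • C + ∑ i : Fin m, (β * 2 ^ (i : ℕ)) • B i := by
  have key : ∑ i : Fin m, (β * 2 ^ (i : ℕ)) • B i
      = (β * x) • g + (β * ∑ i : Fin m, ρ i * 2 ^ (i : ℕ)) • h := by
    rw [hx, Finset.mul_sum, Finset.mul_sum, Finset.sum_smul, Finset.sum_smul,
      ← Finset.sum_add_distrib]
    refine Finset.sum_congr rfl fun i _ => ?_
    rw [hB i, Cm]
    module
  rw [key, hC, hA, hzr, Cm, Cm]
  module
end

section
/- Knowledge extraction (soundness) for zkpCm: suppose A, C ∈ G and there are two accepting transcripts with the same first message A and distinct challenges β₁ ≠ β₂ in ZMod p, i.e., responses z'_x, z'_r, z''_x, z''_r ∈ ZMod p with z'_x • g + z'_r • h = A + β₁ • C and z''_x • g + z''_r • h = A + β₂ • C. Then the extractor recovers an opening of C: C = Cm((z'_x − z''_x)/(β₁ − β₂), (z'_r − z''_r)/(β₁ − β₂)). -/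
/-- Knowledge extraction (soundness) for zkpCm: two accepting transcripts with the same
first message and distinct challenges yield an opening of the commitment `C`. -/
theorem zkpCm_extract (p : ℕ) [Fact p.Prime] {G : Type*} [AddCommGroup G]
    [Module (ZMod p) G] (g h : G) (A C : G) (β₁ β₂ : ZMod p) (hβ : β₁ ≠ β₂)
    (zx' zr' zx'' zr'' : ZMod p)
    (h1 : zx' • g + zr' • h = A + β₁ • C)
    (h2 : zx'' • g + zr'' • h = A + β₂ • C) :
    C = Cm p g h ((zx' - zx'') / (β₁ - β₂)) ((zr' - zr'') / (β₁ - β₂)) := by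
  have hb : β₁ - β₂ ≠ 0 := sub_ne_zero.mpr hβ
  have key : (β₁ - β₂) • C = (zx' - zx'') • g + (zr' - zr'') • h := by
    have e : (zx' - zx'') • g + (zr' - zr'') • h
        = (zx' • g + zr' • h) - (zx'' • g + zr'' • h) := by
      rw [sub_smul, sub_smul]; abel
    rw [e, h1, h2, sub_smul]; abel
  have hC : C = (β₁ - β₂)⁻¹ • ((β₁ - β₂) • C) := by
    rw [smul_smul, inv_mul_cancel₀ hb, one_smul]
  rw [key, smul_add, smul_smul, smul_smul] at hC
  unfold Cm
  rw [div_eq_inv_mul, div_eq_inv_mul]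
  exact hC
end

section
/- Knowledge extraction for zkpMbs (single index): suppose A, C ∈ G, y, z ∈ ZMod p, and there are two accepting transcripts with the same first-round data (A, z) and distinct per-index challenges β₁ ≠ β₂ in ZMod p, i.e., responses w₁, w₂ ∈ ZMod p with z • g + w₁ • h = A + β₁ • (C − y • g) and z • g + w₂ • h = A + β₂ • (C − y • g). Then C = Cm(y, (w₁ − w₂)/(β₁ − β₂)), i.e., C is a Pedersen commitment to the public set element y. -/
/-- Knowledge extraction for zkpMbs (single index): two accepting transcripts with the same
first-round data and distinct challenges show `C` commits to the public set element `y`. -/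
theorem zkpMbs_extract (p : ℕ) [Fact p.Prime] {G : Type*} [AddCommGroup G]
    [Module (ZMod p) G] (g h : G) (A C : G) (y z : ZMod p)
    (β₁ β₂ : ZMod p) (hβ : β₁ ≠ β₂) (w₁ w₂ : ZMod p)
    (h1 : z • g + w₁ • h = A + β₁ • (C - y • g))
    (h2 : z • g + w₂ • h = A + β₂ • (C - y • g)) :
    C = Cm p g h y ((w₁ - w₂) / (β₁ - β₂)) := by
  have hne : β₁ - β₂ ≠ 0 := sub_ne_zero.mpr hβ
  have key : (w₁ - w₂) • h = (β₁ - β₂) • (C - y • g) := by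
    rw [sub_smul, sub_smul]
    have e : (z • g + w₁ • h) - (z • g + w₂ • h)
        = (A + β₁ • (C - y • g)) - (A + β₂ • (C - y • g)) := by rw [h1, h2]
    rwa [add_sub_add_left_eq_sub, add_sub_add_left_eq_sub] at e
  have hC : ((w₁ - w₂) / (β₁ - β₂)) • h = C - y • g := by
    rw [div_eq_inv_mul, mul_smul, key, inv_smul_smul₀ hne]
  unfold Cm
  rw [hC, add_sub_cancel]
end

section
/- Soundness of zkpMbs under independence of the generators: suppose g and h are independent, C = Cm(x, r) for some x, r ∈ ZMod p, and for some public set element y ∈ ZMod p and z, A there are two accepting transcripts as in the extraction, i.e., w₁, w₂ ∈ ZMod p and β₁ ≠ β₂ with z • g + w₁ • h = A + β₁ • (C − y • g) and z • g + w₂ • h = A + β₂ • (C − y • g). Then x = y; in particular, if y ranges over the elements of a public set X, the committed value x belongs to X. -/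
/-- Soundness of zkpMbs under independence of the generators: two accepting transcripts
with distinct challenges force the committed value to equal the public set element `y`. -/
theorem zkpMbs_sound (p : ℕ) [Fact p.Prime] {G : Type*} [AddCommGroup G]
    [Module (ZMod p) G] (g h : G)
    (hind : ∀ a b : ZMod p, a • g + b • h = 0 → a = 0 ∧ b = 0)
    (x r : ZMod p) (C : G) (hC : C = Cm p g h x r)
    (y z : ZMod p) (A : G) (β₁ β₂ : ZMod p) (hβ : β₁ ≠ β₂) (w₁ w₂ : ZMod p)
    (h1 : z • g + w₁ • h = A + β₁ • (C - y • g))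
    (h2 : z • g + w₂ • h = A + β₂ • (C - y • g)) :
    x = y := by
  subst hC
  unfold Cm at h1 h2
  have key : ((β₁ - β₂) * (x - y)) • g + ((β₁ - β₂) * r - (w₁ - w₂)) • h = 0 := by
    have e : ((β₁ - β₂) * (x - y)) • g + ((β₁ - β₂) * r - (w₁ - w₂)) • h
        = ((A + β₁ • (x • g + r • h - y • g)) - (z • g + w₁ • h))
          - ((A + β₂ • (x • g + r • h - y • g)) - (z • g + w₂ • h)) := by
      module
    rw [e, h1, h2]
    simp
  have h0 := (hind _ _ key).1
  rcases mul_eq_zero.mp h0 with h3 | h3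
  · exact absurd (sub_eq_zero.mp h3) hβ
  · exact sub_eq_zero.mp h3
end

section
/- Knowledge extraction for zkpNN: let m ≥ 1, C ∈ G, B : Fin m → G, A ∈ G, and suppose there are two accepting transcripts with the same first-round data and distinct challenges β₁ ≠ β₂ in ZMod p, i.e., responses z_r, z'_r ∈ ZMod p with z_r • h = A − β₁ • C + Σ_{i=1}^{m} (β₁ · 2^{i−1}) • B_i and z'_r • h = A − β₂ • C + Σ_{i=1}^{m} (β₂ · 2^{i−1}) • B_i. Then Σ_{i=1}^{m} 2^{i−1} • B_i − C = ((z_r − z'_r)/(β₁ − β₂)) • h. -/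
/-- Knowledge extraction for zkpNN: two accepting transcripts with the same first-round
data and distinct challenges yield the relation
`Σ 2^(i-1) • B_i − C = ((z_r − z'_r)/(β₁ − β₂)) • h`. -/
theorem zkpNN_extract (p : ℕ) [Fact p.Prime] {G : Type*} [AddCommGroup G]
    [Module (ZMod p) G] (g h : G) (m : ℕ) (hm : 1 ≤ m)
    (C A : G) (B : Fin m → G) (β₁ β₂ : ZMod p) (hβ : β₁ ≠ β₂) (zr zr' : ZMod p)
    (h1 : zr • h = A - β₁ • C + ∑ i : Fin m, (β₁ * 2 ^ (i : ℕ)) • B i)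
    (h2 : zr' • h = A - β₂ • C + ∑ i : Fin m, (β₂ * 2 ^ (i : ℕ)) • B i) :
    ∑ i : Fin m, (2 ^ (i : ℕ) : ZMod p) • B i - C = ((zr - zr') / (β₁ - β₂)) • h := by
  simp only [mul_smul, ← Finset.smul_sum] at h1 h2
  have hd : β₁ - β₂ ≠ 0 := sub_ne_zero.mpr hβ
  rw [div_eq_inv_mul, mul_smul, sub_smul, h1, h2, eq_inv_smul_iff₀ hd]
  module
end

section
/- Soundness of zkpNN under independence of the generators: suppose g and h are independent, C = Cm(x, r), and for each i ∈ Fin m, B_i = Cm((β̂_i : ZMod p), ρ_i) where each β̂_i ∈ ℕ is a bit (β̂_i = 0 or β̂_i = 1). If the extracted relation Σ_{i=1}^{m} 2^{i−1} • B_i − C = w • h holds for some w ∈ ZMod p, then x is the image in ZMod p of the natural number N = Σ_{i=1}^{m} β̂_i · 2^{i−1}, and N < 2^m; in particular the committed value is represented by a non-negative integer less than 2^m. -/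
/-- Soundness of zkpNN under independence of the generators: the extracted relation
forces the committed value to be the image of a natural number `N < 2^m`. -/
theorem zkpNN_sound (p : ℕ) [Fact p.Prime] {G : Type*} [AddCommGroup G]
    [Module (ZMod p) G] (g h : G)
    (hind : ∀ a b : ZMod p, a • g + b • h = 0 → a = 0 ∧ b = 0)
    (m : ℕ) (x r : ZMod p) (C : G) (hC : C = Cm p g h x r)
    (bits : Fin m → ℕ) (hbits : ∀ i, bits i = 0 ∨ bits i = 1)
    (ρ : Fin m → ZMod p) (B : Fin m → G)
    (hB : ∀ i, B i = Cm p g h ((bits i : ZMod p)) (ρ i))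
    (w : ZMod p)
    (hrel : ∑ i : Fin m, (2 ^ (i : ℕ) : ZMod p) • B i - C = w • h) :
    x = ((∑ i : Fin m, bits i * 2 ^ (i : ℕ) : ℕ) : ZMod p) ∧
      (∑ i : Fin m, bits i * 2 ^ (i : ℕ)) < 2 ^ m := by
  constructor
  · have key : (∑ i : Fin m, (2 ^ (i : ℕ) : ZMod p) • B i)
        = (∑ i : Fin m, (bits i : ZMod p) * 2 ^ (i : ℕ)) • g
          + (∑ i : Fin m, (2 ^ (i : ℕ) : ZMod p) * ρ i) • h := by
      rw [Finset.sum_smul, Finset.sum_smul, ← Finset.sum_add_distrib]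
      refine Finset.sum_congr rfl fun i _ => ?_
      rw [hB i, Cm, smul_add, smul_smul, smul_smul, mul_comm]
    rw [key, hC, Cm] at hrel
    have h0 := (hind ((∑ i : Fin m, (bits i : ZMod p) * 2 ^ (i : ℕ)) - x)
      ((∑ i : Fin m, (2 ^ (i : ℕ) : ZMod p) * ρ i) - r - w) (by
        rw [sub_smul, sub_smul, sub_smul, ← hrel]; abel)).1
    push_cast
    exact (sub_eq_zero.mp h0).symm
  · have hle : (∑ i : Fin m, bits i * 2 ^ (i : ℕ)) ≤ ∑ i : Fin m, 2 ^ (i : ℕ) := by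
      refine Finset.sum_le_sum fun i _ => ?_
      rcases hbits i with hi | hi <;> simp [hi]
    rw [Fin.sum_univ_eq_sum_range (fun i => 2 ^ i) m] at hle
    exact lt_of_le_of_lt hle (Nat.geomSum_lt (le_refl 2) (by simp))
end
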